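/- Let n ≥ 1, let P := {x ∈ ℝ^n : x_i > 0 for all i, and x_1 + … + x_n < (n+1)/n}, and define φ : P → ℝ by φ(x) = −1 + x_1 + … + x_n. Then ∫_{P_+} φ dμ = 1/(n+1)!, ∫_{P_−} (−φ) dμ = 1/(n+1)!, hence ∫_P φ dμ = 0 and ∫_P |φ| dμ = 2/(n+1)!; moreover μ(P) = (1/n!)·((n+1)/n)^n. -/

import Mathlib

open MeasureTheory Set

/-!
Let `s₊ᵏ / k!` be the normalized truncated power. Convolving it with the indicator of `(0, ∞)`
raises `k` by one, so integrating `(t - ∑ xᵢ)₊ᵏ / k!` over the positive orthant of `ℝᵈ` gives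
`t₊ᵏ⁺ᵈ / (k + d)!`. For `t > 0` this is an integral over the open simplex `∑ xᵢ < t`: `k = 0` is its
volume `tᵈ / d!`, and `k = 1` says that `∑ xᵢ` has mean `t d / (d + 1)` there.

With `d = n` and `t = (n + 1) / n` this mean is `1`, whence `∫_P φ = 0`. Up to the hyperplane
`φ = 0`, the set `P₋` is the simplex with `t = 1`, so `k = 1` also evaluates `∫_{P₋} (-φ)`; the
remaining two integrals are linear combinations of these.
-/

section PosNegParts

variable {α : Type*} [MeasurableSpace α] {μ : Measure α} {s : Set α} {f : α → ℝ}

lemma setIntegral_sep_pos_eq_add (hf : IntegrableOn f s μ) :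
    ∫ x in {x ∈ s | 0 < f x}, f x ∂μ =
      ∫ x in s, f x ∂μ + ∫ x in {x ∈ s | f x ≤ 0}, -f x ∂μ := by
  have hnonpos : NullMeasurableSet {x | f x ≤ 0} (μ.restrict s) :=
    hf.1.nullMeasurableSet_le aestronglyMeasurable_const
  have hsplit := integral_add_compl₀ hnonpos hf
  have hcompl : {x | f x ≤ 0}ᶜ ∩ s = {x ∈ s | 0 < f x} := by ext; simp [and_comm]
  rw [Measure.restrict_restrict₀ hnonpos, Measure.restrict_restrict₀ hnonpos.compl, hcompl,
    inter_comm] at hsplit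
  change ∫ x in {x ∈ s | f x ≤ 0}, f x ∂μ + _ = _ at hsplit
  rw [← hsplit, integral_neg]
  ring

lemma setIntegral_abs_eq_add_two_mul (hf : IntegrableOn f s μ) :
    ∫ x in s, |f x| ∂μ = ∫ x in s, f x ∂μ + 2 * ∫ x in {x ∈ s | f x ≤ 0}, -f x ∂μ := by
  have hnonpos : NullMeasurableSet {x | f x ≤ 0} (μ.restrict s) :=
    hf.1.nullMeasurableSet_le aestronglyMeasurable_const
  have habs (x : α) : |f x| = f x + 2 * {x | f x ≤ 0}.indicator (fun x => -f x) x := by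
    by_cases hx : f x ≤ 0
    · rw [indicator_of_mem (mem_ofPred_eq ▸ hx), abs_of_nonpos hx]
      ring
    · rw [indicator_of_notMem (mem_ofPred_eq ▸ hx), abs_of_pos (not_le.1 hx)]
      ring
  simp only [habs]
  rw [integral_add hf ((hf.fun_neg.indicator₀ hnonpos).const_mul 2), integral_const_mul,
    integral_indicator₀ hnonpos, Measure.restrict_restrict₀ hnonpos, inter_comm]
  rfl

end PosNegParts

section SimplexIntegrals

open scoped ENNReal Nat

variable (ι : Type*) [Fintype ι]

/-- The normalized truncated power `s₊ᵏ / k!`, valued in `ℝ≥0∞` so that its integrals need no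
integrability side conditions. For `k = 0` it is the indicator of `(0, ∞)`, hence `0` at `0`. -/
noncomputable def truncatedPower (k : ℕ) : ℝ → ℝ≥0∞ :=
  (Ioi 0).indicator fun s => ENNReal.ofReal (s ^ k / k !)

lemma measurable_truncatedPower (k : ℕ) : Measurable (truncatedPower k) :=
  Measurable.indicator (by fun_prop) measurableSet_Ioi

lemma integral_pow_sub_div_factorial (k : ℕ) (t : ℝ) :
    ∫ u in 0..t, (t - u) ^ k / (k ! : ℝ) = t ^ (k + 1) / (k + 1)! := by
  rw [intervalIntegral.integral_comp_sub_left (fun u => u ^ k / (k ! : ℝ)),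
    intervalIntegral.integral_div, integral_pow, Nat.factorial_succ]
  push_cast
  simp [div_div]

lemma lintegral_truncatedPower_sub (k : ℕ) (t : ℝ) :
    ∫⁻ u in Ioi 0, truncatedPower k (t - u) = truncatedPower (k + 1) t := by
  have hrestrict : ∫⁻ u in Ioi 0, truncatedPower k (t - u) =
      ∫⁻ u in Ioo 0 t, ENNReal.ofReal ((t - u) ^ k / k !) := by
    rw [← Ioi_inter_Iio, inter_comm, ← setLIntegral_indicator measurableSet_Iio]
    congr! 2 with u
    simp only [truncatedPower, indicator, mem_Ioi, mem_Iio, sub_pos]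
  rw [hrestrict]
  rcases le_or_gt t 0 with ht | ht
  · simp [truncatedPower, ht]
  have hnonneg : ∀ᵐ u ∂volume.restrict (Ioo 0 t), 0 ≤ (t - u) ^ k / (k ! : ℝ) := by
    filter_upwards [ae_restrict_mem measurableSet_Ioo] with u hu
    have := sub_pos.2 hu.2
    positivity
  have hint : IntegrableOn (fun u => (t - u) ^ k / (k ! : ℝ)) (Ioo 0 t) :=
    ((by fun_prop : Continuous fun u : ℝ => (t - u) ^ k / (k ! : ℝ)).integrableOn_Icc).mono_set
      Ioo_subset_Icc_self
  rw [← ofReal_integral_eq_lintegral_ofReal hint hnonneg, ← integral_Ioc_eq_integral_Ioo,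
    ← intervalIntegral.integral_of_le ht.le, integral_pow_sub_div_factorial, truncatedPower,
    indicator_of_mem (mem_Ioi.2 ht)]

lemma lintegral_truncatedPower_sub_sum (k : ℕ) (t : ℝ) :
    ∫⁻ x, truncatedPower k (t - ∑ i, x i) ∂Measure.pi (fun _ : ι => volume.restrict (Ioi 0)) =
      truncatedPower (k + Fintype.card ι) t := by
  revert k t
  refine Fintype.induction_empty_option (P := fun ι _ => ∀ k t,
    ∫⁻ x, truncatedPower k (t - ∑ i, x i) ∂Measure.pi (fun _ : ι => volume.restrict (Ioi 0)) =
      truncatedPower (k + Fintype.card ι) t) ?of_equiv ?empty ?option ι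
  case of_equiv =>
    intro α β _ e ih k t
    let := Fintype.ofEquiv β e.symm
    have he := measurePreserving_piCongrLeft (fun _ : β => volume.restrict (Ioi (0 : ℝ))) e
    rw [← Fintype.card_congr e, ← ih k t,
      ← he.lintegral_comp_emb (MeasurableEquiv.measurableEmbedding _)]
    simp only [MeasurableEquiv.coe_piCongrLeft, ← e.sum_comp, Equiv.piCongrLeft_apply_apply]
  case empty => simp
  case option =>
    intro α _ ih k t
    have hmeas := measurable_truncatedPower k
    rw [← Measure.pi_map_piOptionEquivProd, lintegral_map_equiv, lintegral_prod]
    · have hsplit : ∀ (x : α → ℝ) (u : ℝ),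
          t - ∑ i, (MeasurableEquiv.piOptionEquivProd fun _ => ℝ).symm (x, u) i =
            t - ∑ i, x i - u := by
        intro x u
        rw [Fintype.sum_option, add_comm, ← sub_sub]
        rfl
      simp only [hsplit, lintegral_truncatedPower_sub, ih, Fintype.card_option]
      congr 1
      ring
    · fun_prop

/-- The open corner simplex of size `t` in `ℝ^ι`, with vertices `0` and `t eᵢ`; the set `P` of the
theorem is the one of size `(n + 1) / n`. It is empty for `t ≤ 0`. -/
def openSimplex (t : ℝ) : Set (ι → ℝ) := {x | (∀ i, 0 < x i) ∧ ∑ i, x i < t}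

variable {ι}

lemma openSimplex_eq_inter (t : ℝ) :
    openSimplex ι t = {x | ∑ i, x i < t} ∩ univ.pi fun _ => Ioi 0 := by
  ext
  simp [openSimplex, and_comm]

lemma measurableSet_openSimplex (t : ℝ) : MeasurableSet (openSimplex ι t) := by
  rw [openSimplex_eq_inter]
  exact (measurableSet_lt (by fun_prop) measurable_const).inter
    (.univ_pi fun _ => measurableSet_Ioi)

lemma openSimplex_subset_Icc (t : ℝ) : openSimplex ι t ⊆ Icc 0 fun _ => t := fun _ hx =>
  ⟨fun i => (hx.1 i).le, fun i =>
    (Finset.single_le_sum (fun j _ => (hx.1 j).le) (Finset.mem_univ i)).trans hx.2.le⟩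

lemma integrableOn_openSimplex {E : Type*} [NormedAddCommGroup E] {f : (ι → ℝ) → E}
    (hf : Continuous f) (t : ℝ) : IntegrableOn f (openSimplex ι t) :=
  hf.integrableOn_Icc.mono_set (openSimplex_subset_Icc t)

lemma setLIntegral_openSimplex_sub_sum_pow (k : ℕ) (t : ℝ) :
    ∫⁻ x in openSimplex ι t, ENNReal.ofReal ((t - ∑ i, x i) ^ k / k !) =
      truncatedPower (k + Fintype.card ι) t := by
  have hmeas : MeasurableSet {x : ι → ℝ | ∑ i, x i < t} :=
    measurableSet_lt (by fun_prop) measurable_const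
  rw [← lintegral_truncatedPower_sub_sum, ← Measure.restrict_pi_pi, ← volume_pi,
    openSimplex_eq_inter, ← setLIntegral_indicator hmeas]
  simp only [truncatedPower, indicator, mem_Ioi, mem_ofPred_eq, sub_pos]

lemma setIntegral_openSimplex_sub_sum_pow (k : ℕ) {t : ℝ} (ht : 0 < t) :
    ∫ x in openSimplex ι t, (t - ∑ i, x i) ^ k / (k ! : ℝ) =
      t ^ (k + Fintype.card ι) / (k + Fintype.card ι)! := by
  have hnonneg : ∀ᵐ x ∂volume.restrict (openSimplex ι t),
      0 ≤ (t - ∑ i, x i) ^ k / (k ! : ℝ) := by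
    filter_upwards [ae_restrict_mem (measurableSet_openSimplex t)] with x hx
    have := sub_pos.2 hx.2
    positivity
  rw [integral_eq_lintegral_of_nonneg_ae hnonneg (by fun_prop),
    setLIntegral_openSimplex_sub_sum_pow, truncatedPower, indicator_of_mem (mem_Ioi.2 ht),
    ENNReal.toReal_ofReal (by positivity)]

lemma volume_real_openSimplex {t : ℝ} (ht : 0 < t) :
    volume.real (openSimplex ι t) = t ^ Fintype.card ι / (Fintype.card ι)! := by
  simpa using setIntegral_openSimplex_sub_sum_pow (ι := ι) 0 ht

lemma setIntegral_openSimplex_sub_sum {t : ℝ} (ht : 0 < t) :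
    ∫ x in openSimplex ι t, (t - ∑ i, x i) =
      t ^ (Fintype.card ι + 1) / (Fintype.card ι + 1)! := by
  simpa [add_comm] using setIntegral_openSimplex_sub_sum_pow (ι := ι) 1 ht

lemma setIntegral_openSimplex_sep_sum_le {c t : ℝ} (hc : 0 < c) (hct : c ≤ t) :
    ∫ x in {x ∈ openSimplex ι t | ∑ i, x i ≤ c}, (c - ∑ i, x i) =
      c ^ (Fintype.card ι + 1) / (Fintype.card ι + 1)! := by
  have hmeas : MeasurableSet {x ∈ openSimplex ι t | ∑ i, x i ≤ c} :=
    (measurableSet_openSimplex t).inter <| measurableSet_le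
      (by fun_prop : Measurable fun x : ι → ℝ => ∑ i, x i) measurable_const
  have hsub : openSimplex ι c ⊆ {x ∈ openSimplex ι t | ∑ i, x i ≤ c} :=
    fun x hx => ⟨⟨hx.1, hx.2.trans_le hct⟩, hx.2.le⟩
  rw [← setIntegral_openSimplex_sub_sum hc]
  refine setIntegral_eq_of_subset_of_forall_sdiff_eq_zero hmeas hsub ?_
  rintro x ⟨⟨⟨hpos, -⟩, hle⟩, hnotMem⟩
  exact sub_eq_zero.2 (le_antisymm (not_lt.1 fun hlt => hnotMem ⟨hpos, hlt⟩) hle)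

lemma setIntegral_openSimplex_sum_sub (c : ℝ) {t : ℝ} (ht : 0 < t) :
    ∫ x in openSimplex ι t, (∑ i, x i - c) =
      (Fintype.card ι / (Fintype.card ι + 1) * t - c) *
        (t ^ Fintype.card ι / (Fintype.card ι)!) := by
  calc ∫ x in openSimplex ι t, (∑ i, x i - c)
      = ∫ x in openSimplex ι t, ((t - c) - (t - ∑ i, x i)) := by
        simp only [sub_sub_sub_cancel_left]
    _ = (t - c) * (t ^ Fintype.card ι / (Fintype.card ι)!) -
          t ^ (Fintype.card ι + 1) / (Fintype.card ι + 1)! := by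
        rw [integral_sub (integrableOn_openSimplex (by fun_prop) t)
          (integrableOn_openSimplex (by fun_prop) t), setIntegral_const,
          volume_real_openSimplex ht, setIntegral_openSimplex_sub_sum ht, smul_eq_mul, mul_comm]
    _ = _ := by
        rw [Nat.factorial_succ]
        push_cast
        field_simp
        ring

end SimplexIntegrals

/-- Explicit integrals for the extremal simplex example:
`∫_{P_+} φ = ∫_{P_-} (-φ) = 1/(n+1)!`, so `∫_P φ = 0` and `∫_P |φ| = 2/(n+1)!`;
moreover `μ(P) = (1/n!) ((n+1)/n)^n`. -/
theorem stmt_7 (n : ℕ) (hn : 1 ≤ n)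
    (P : Set (Fin n → ℝ))
    (hP : P = {x | (∀ i, 0 < x i) ∧ ∑ i, x i < (n + 1 : ℝ) / n})
    (φ : (Fin n → ℝ) → ℝ)
    (hφdef : φ = fun x => -1 + ∑ i, x i) :
    (∫ x in {x ∈ P | 0 < φ x}, φ x) = 1 / (Nat.factorial (n + 1) : ℝ) ∧
    (∫ x in {x ∈ P | φ x ≤ 0}, (-φ x)) = 1 / (Nat.factorial (n + 1) : ℝ) ∧
    (∫ x in P, φ x) = 0 ∧
    (∫ x in P, |φ x|) = 2 / (Nat.factorial (n + 1) : ℝ) ∧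
    (volume P).toReal = (1 / (Nat.factorial n : ℝ)) * ((n + 1 : ℝ) / n) ^ n := by
  have hn0 : (0 : ℝ) < n := Nat.cast_pos.2 hn
  have ht : 1 ≤ (n + 1 : ℝ) / n := by rw [one_le_div hn0]; linarith
  have ht0 : 0 < (n + 1 : ℝ) / n := one_pos.trans_le ht
  replace hP : P = openSimplex (Fin n) ((n + 1 : ℝ) / n) := hP
  have hint : IntegrableOn φ P := hP ▸ integrableOn_openSimplex (by rw [hφdef]; fun_prop) _
  have hneg : ∫ x in {x ∈ P | φ x ≤ 0}, -φ x = 1 / (Nat.factorial (n + 1) : ℝ) := by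
    simpa [hP, hφdef, ← sub_eq_add_neg, add_comm] using
      setIntegral_openSimplex_sep_sum_le (ι := Fin n) one_pos ht
  have hzero : ∫ x in P, φ x = 0 := by
    have hmean : (n / (n + 1) * ((n + 1) / n) - 1 : ℝ) = 0 := by field_simp; ring
    simpa [hP, hφdef, ← sub_eq_neg_add, hmean] using
      setIntegral_openSimplex_sum_sub (ι := Fin n) 1 ht0
  refine ⟨?_, hneg, hzero, ?_, ?_⟩
  · rw [setIntegral_sep_pos_eq_add hint, hzero, hneg, zero_add]
  · rw [setIntegral_abs_eq_add_two_mul hint, hzero, hneg, zero_add, mul_one_div]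
  · rw [← measureReal_def, hP, volume_real_openSimplex ht0, Fintype.card_fin, div_eq_inv_mul,
      one_div]
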